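/- Let f: ℝ^d → ℝ have L₁-Lipschitz gradient. For fixed x ∈ ℝ^d, independent standard Gaussians u, u' in ℝ^d, and δ > 0, it holds that E[(f(x + δu) - f(x + δu'))² ‖u‖²] ≤ 4(d+4)²‖∇f(x)‖² δ² + 2 L₁² δ⁴ (d+6)³. -/

import Mathlib

open MeasureTheory ProbabilityTheory

noncomputable def stdGaussian (d : ℕ) : Measure (EuclideanSpace ℝ (Fin d)) :=
  (Measure.pi fun _ : Fin d => gaussianReal 0 1).map
    ⇑(EuclideanSpace.equiv (Fin d) ℝ).symm


lemma aux_step (P Q : ℝ → ℝ) (h : ∀ t, HasDerivAt P (Q t - t * P t) t) :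
    deriv (fun t : ℝ => P t * Real.exp (t ^ 2 / 2)) = fun t => Q t * Real.exp (t ^ 2 / 2) := by
  funext t
  have h1 : HasDerivAt (fun t : ℝ => t ^ 2 / 2) t t := by
    have := (hasDerivAt_pow 2 t).div_const 2
    convert! this using 1
    norm_num
  have := ((h t).mul h1.exp).deriv
  refine Eq.trans this ?_
  ring

lemma aux_moments :
    (∫ x, x ^ 2 ∂(gaussianReal 0 1) = 1) ∧ (∫ x, x ^ 4 ∂(gaussianReal 0 1) = 3) ∧
    (∫ x, x ^ 6 ∂(gaussianReal 0 1) = 15) := by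
  have key : ∀ n, ∫ x, x ^ n ∂(gaussianReal 0 1)
      = iteratedDeriv n (fun t : ℝ => Real.exp (t ^ 2 / 2)) 0 := by
    intro n
    have := iteratedDeriv_mgf_zero (X := fun x : ℝ => x) (μ := gaussianReal 0 1) (by simp) n
    rw [mgf_fun_id_gaussianReal] at this
    simpa using this.symm
  have d0 : iteratedDeriv 0 (fun t : ℝ => Real.exp (t ^ 2 / 2))
      = fun t : ℝ => (1 : ℝ) * Real.exp (t ^ 2 / 2) := by simp
  have d1 : iteratedDeriv 1 (fun t : ℝ => Real.exp (t ^ 2 / 2))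
      = fun t : ℝ => t * Real.exp (t ^ 2 / 2) := by
    rw [iteratedDeriv_succ, d0]
    refine aux_step (fun _ => 1) (fun t => t) (fun t => ?_)
    convert! hasDerivAt_const t (1 : ℝ) using 1
    ring
  have d2 : iteratedDeriv 2 (fun t : ℝ => Real.exp (t ^ 2 / 2))
      = fun t : ℝ => (t ^ 2 + 1) * Real.exp (t ^ 2 / 2) := by
    rw [iteratedDeriv_succ, d1]
    refine aux_step (fun t => t) (fun t => t ^ 2 + 1) (fun t => ?_)
    convert! hasDerivAt_id t using 1
    ring
  have d3 : iteratedDeriv 3 (fun t : ℝ => Real.exp (t ^ 2 / 2))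
      = fun t : ℝ => (t ^ 3 + 3 * t) * Real.exp (t ^ 2 / 2) := by
    rw [iteratedDeriv_succ, d2]
    refine aux_step (fun t => t ^ 2 + 1) (fun t => t ^ 3 + 3 * t) (fun t => ?_)
    convert! (hasDerivAt_pow 2 t).add_const 1 using 1
    push_cast; ring
  have d4 : iteratedDeriv 4 (fun t : ℝ => Real.exp (t ^ 2 / 2))
      = fun t : ℝ => (t ^ 4 + 6 * t ^ 2 + 3) * Real.exp (t ^ 2 / 2) := by
    rw [iteratedDeriv_succ, d3]
    refine aux_step (fun t => t ^ 3 + 3 * t) (fun t => t ^ 4 + 6 * t ^ 2 + 3) (fun t => ?_)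
    convert! (hasDerivAt_pow 3 t).add ((hasDerivAt_id t).const_mul 3) using 1
    push_cast; ring
  have d5 : iteratedDeriv 5 (fun t : ℝ => Real.exp (t ^ 2 / 2))
      = fun t : ℝ => (t ^ 5 + 10 * t ^ 3 + 15 * t) * Real.exp (t ^ 2 / 2) := by
    rw [iteratedDeriv_succ, d4]
    refine aux_step (fun t => t ^ 4 + 6 * t ^ 2 + 3)
      (fun t => t ^ 5 + 10 * t ^ 3 + 15 * t) (fun t => ?_)
    convert! ((hasDerivAt_pow 4 t).add ((hasDerivAt_pow 2 t).const_mul 6)).add_const 3 using 1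
    push_cast; ring
  have d6 : iteratedDeriv 6 (fun t : ℝ => Real.exp (t ^ 2 / 2))
      = fun t : ℝ => (t ^ 6 + 15 * t ^ 4 + 45 * t ^ 2 + 15) * Real.exp (t ^ 2 / 2) := by
    rw [iteratedDeriv_succ, d5]
    refine aux_step (fun t => t ^ 5 + 10 * t ^ 3 + 15 * t)
      (fun t => t ^ 6 + 15 * t ^ 4 + 45 * t ^ 2 + 15) (fun t => ?_)
    convert! ((hasDerivAt_pow 5 t).add ((hasDerivAt_pow 3 t).const_mul 10)).add
      ((hasDerivAt_id t).const_mul 15) using 1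
    push_cast; ring
  refine ⟨?_, ?_, ?_⟩
  · rw [key, d2]; norm_num
  · rw [key, d4]; norm_num
  · rw [key, d6]; norm_num

lemma aux_int1 (n : ℕ) : Integrable (fun x : ℝ => x ^ n) (gaussianReal 0 1) := by
  have := (memLp_id_gaussianReal (μ := 0) (v := 1) n).integrable_norm_pow'
  refine this.mono (by fun_prop) (Filter.Eventually.of_forall fun x => ?_)
  simp

lemma aux_add {A B : Type*} [MeasurableSpace A] [MeasurableSpace B] (μ : Measure A)
    (ν : Measure B) [IsProbabilityMeasure μ] [IsProbabilityMeasure ν] (a : A → ℝ) (b : B → ℝ)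
    (ha : ∀ n, Integrable (fun x => a x ^ n) μ) (hb : ∀ n, Integrable (fun x => b x ^ n) ν)
    (n : ℕ) :
    Integrable (fun p : A × B => (a p.1 + b p.2) ^ n) (μ.prod ν) ∧
    ∫ p : A × B, (a p.1 + b p.2) ^ n ∂(μ.prod ν) =
      ∑ m ∈ Finset.range (n + 1), (∫ x, a x ^ m ∂μ) * (∫ y, b y ^ (n - m) ∂ν) * (n.choose m) := by
  have hi : ∀ m ∈ Finset.range (n + 1), Integrable (fun p : A × B =>
      a p.1 ^ m * b p.2 ^ (n - m) * (n.choose m : ℝ)) (μ.prod ν) := fun m _ =>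
    ((ha m).mul_prod (hb (n - m))).mul_const _
  simp_rw [add_pow]
  refine ⟨integrable_finsetSum _ hi, ?_⟩
  rw [integral_finsetSum _ hi]
  refine Finset.sum_congr rfl fun m _ => ?_
  rw [integral_mul_const, integral_prod_mul (fun x => a x ^ m) (fun y => b y ^ (n - m))]

lemma aux_pi (d : ℕ) :
    (∀ n, Integrable (fun x : Fin d → ℝ => (∑ i, x i ^ 2) ^ n)
      (Measure.pi fun _ : Fin d => gaussianReal 0 1)) ∧
    (∫ x : Fin d → ℝ, (∑ i, x i ^ 2) ^ 1 ∂(Measure.pi fun _ : Fin d => gaussianReal 0 1)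
      = d) ∧
    (∫ x : Fin d → ℝ, (∑ i, x i ^ 2) ^ 2 ∂(Measure.pi fun _ : Fin d => gaussianReal 0 1)
      = d * (d + 2)) ∧
    (∫ x : Fin d → ℝ, (∑ i, x i ^ 2) ^ 3 ∂(Measure.pi fun _ : Fin d => gaussianReal 0 1)
      = d * (d + 2) * (d + 4)) := by
  induction d with
  | zero => simp
  | succ d ih =>
    obtain ⟨hi, h1, h2, h3⟩ := ih
    obtain ⟨m1, m2, m3⟩ := aux_moments
    have mp := (measurePreserving_piFinSuccAbove (fun _ : Fin (d + 1) => gaussianReal 0 1) 0).symm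
    have hadd := aux_add (gaussianReal 0 1) (Measure.pi fun _ : Fin d => gaussianReal 0 1)
      (fun x => x ^ 2) (fun x => ∑ i, x i ^ 2)
      (fun n => by simpa only [← pow_mul] using aux_int1 (2 * n)) hi
    have hI : ∀ n, ∫ x : Fin (d + 1) → ℝ, (∑ i, x i ^ 2) ^ n
        ∂(Measure.pi fun _ : Fin (d + 1) => gaussianReal 0 1) =
        ∫ p : ℝ × (Fin d → ℝ), (p.1 ^ 2 + ∑ i, p.2 i ^ 2) ^ n
          ∂((gaussianReal 0 1).prod (Measure.pi fun _ : Fin d => gaussianReal 0 1)) := by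
      intro n
      rw [← mp.integral_comp']
      simp [MeasurableEquiv.piFinSuccAbove_symm_apply, Fin.insertNthEquiv,
        Fin.sum_univ_succ]
    refine ⟨fun n => ?_, ?_, ?_, ?_⟩
    · rw [← mp.integrable_comp_emb (MeasurableEquiv.measurableEmbedding _)]
      have := (hadd n).1
      simpa [Function.comp_def, MeasurableEquiv.piFinSuccAbove_symm_apply, Fin.insertNthEquiv,
        Fin.sum_univ_succ, Fin.insertNth_zero] using this
    · rw [hI, (hadd 1).2]
      simp only [Finset.sum_range_succ, Finset.sum_range_zero, ← pow_mul] 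
      norm_num [m1, m2, m3, h1, h2, h3]
      norm_num at h1
      rw [h1]
    · rw [hI, (hadd 2).2]
      simp only [Finset.sum_range_succ, Finset.sum_range_zero, ← pow_mul] 
      norm_num [m1, m2, m3, h1, h2, h3]
      norm_num at h1
      rw [h1]; ring
    · rw [hI, (hadd 3).2]
      simp only [Finset.sum_range_succ, Finset.sum_range_zero, ← pow_mul] 
      norm_num [m1, m2, m3, h1, h2, h3, Nat.choose]
      norm_num at h1
      rw [h1]; ring

lemma aux_eq (d : ℕ) :
    _root_.stdGaussian d = ProbabilityTheory.stdGaussian (EuclideanSpace ℝ (Fin d)) := by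
  rw [← map_pi_eq_stdGaussian]; rfl

lemma aux_norm (d n : ℕ) : 
    Integrable (fun u => ‖u‖ ^ (2 * n)) (_root_.stdGaussian d) ∧
    ∫ u, ‖u‖ ^ (2 * n) ∂(_root_.stdGaussian d) =
     ∫ x : Fin d → ℝ, (∑ i, x i ^ 2) ^ n ∂(Measure.pi fun _ : Fin d => gaussianReal 0 1) := by
  have hm : Measurable (EuclideanSpace.equiv (Fin d) ℝ).symm :=
    (EuclideanSpace.equiv (Fin d) ℝ).symm.continuous.measurable
  have hs : AEStronglyMeasurable (fun u : EuclideanSpace ℝ (Fin d) => ‖u‖ ^ (2 * n))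
    (_root_.stdGaussian d) := by fun_prop
  have he : ∀ x : Fin d → ℝ, ‖(EuclideanSpace.equiv (Fin d) ℝ).symm x‖ ^ (2 * n)
      = (∑ i, x i ^ 2) ^ n := by
    intro x
    rw [pow_mul, EuclideanSpace.real_norm_sq_eq]
    rfl
  unfold _root_.stdGaussian at hs ⊢
  rw [integrable_map_measure hs hm.aemeasurable, integral_map hm.aemeasurable hs]
  simp only [Function.comp_def, he]
  exact ⟨(aux_pi d).1 n, trivial⟩

lemma aux_taylor {E : Type*} [NormedAddCommGroup E] [InnerProductSpace ℝ E] [CompleteSpace E]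
    (f : E → ℝ) (L : ℝ) (hdiff : Differentiable ℝ f)
    (hL : ∀ x y, ‖gradient f x - gradient f y‖ ≤ L * ‖x - y‖) (x v : E) :
    |f (x + v) - f x - inner ℝ (gradient f x) v| ≤ L / 2 * ‖v‖ ^ 2 := by
  have hd : ∀ t : ℝ, HasDerivAt
      (fun t : ℝ => f (x + t • v) - f x - t * inner ℝ (gradient f x) v)
      (inner ℝ (gradient f (x + t • v) - gradient f x) v) t := by
    intro t
    have h1 : HasDerivAt (fun t : ℝ => x + t • v) v t := by
      simpa using ((hasDerivAt_id t).smul_const v).const_add x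
    have h2 := (hdiff (x + t • v)).hasGradientAt.hasFDerivAt.comp_hasDerivAt t h1
    have h3 := (h2.sub_const (f x)).sub
      ((hasDerivAt_id t).mul_const (inner ℝ (gradient f x) v))
    convert! h3 using 1
    simp [inner_sub_left]
  have := image_norm_le_of_norm_deriv_right_le_deriv_boundary (a := 0) (b := 1)
    (f := fun t : ℝ => f (x + t • v) - f x - t * inner ℝ (gradient f x) v)
    (B := fun t => L / 2 * ‖v‖ ^ 2 * t ^ 2) (B' := fun t => L * t * ‖v‖ ^ 2)
    (fun t _ => (hd t).continuousAt.continuousWithinAt)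
    (fun t _ => (hd t).hasDerivWithinAt) (by simp)
    (fun t => by
      convert! (hasDerivAt_pow 2 t).const_mul (L / 2 * ‖v‖ ^ 2) using 1
      push_cast; ring)
    (fun t ht => by
      refine (norm_inner_le_norm _ _).trans ?_
      have h := hL (x + t • v) x
      rw [add_sub_cancel_left, norm_smul, Real.norm_of_nonneg ht.1] at h
      calc _ ≤ (L * (t * ‖v‖)) * ‖v‖ := by gcongr
        _ = _ := by ring) (show (1 : ℝ) ∈ Set.Icc 0 1 by simp)
  simpa using this

lemma aux_bound {E : Type*} [NormedAddCommGroup E] [InnerProductSpace ℝ E] [CompleteSpace E]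
    (f : E → ℝ) (L δ : ℝ) (hdiff : Differentiable ℝ f)
    (hL : ∀ x y, ‖gradient f x - gradient f y‖ ≤ L * ‖x - y‖) (x u v : E) :
    (f (x + δ • u) - f (x + δ • v)) ^ 2 * ‖u‖ ^ 2 ≤
      2 * δ ^ 2 * ‖gradient f x‖ ^ 2 *
        (‖u‖ ^ (2 * 2) + ‖u‖ ^ (2 * 1) * ‖v‖ ^ (2 * 1) - 2 * (‖u‖ ^ 2 * inner ℝ u v))
      + L ^ 2 * δ ^ 4 * (‖u‖ ^ (2 * 3) + ‖u‖ ^ (2 * 1) * ‖v‖ ^ (2 * 2)) := by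
  have hu := aux_taylor f L hdiff hL x (δ • u)
  have hv := aux_taylor f L hdiff hL x (δ • v)
  rw [norm_smul, mul_pow, Real.norm_eq_abs, sq_abs] at hu hv
  set b := f (x + δ • u) - f x - inner ℝ (gradient f x) (δ • u) with hb
  set c := f (x + δ • v) - f x - inner ℝ (gradient f x) (δ • v) with hc
  have ha : f (x + δ • u) - f (x + δ • v) = δ * inner ℝ (gradient f x) (u - v) + (b - c) := by
    rw [hb, hc, inner_smul_right, inner_smul_right, inner_sub_right]; ring
  set a := inner ℝ (gradient f x) (u - v) with ha'
  have h1 : a ^ 2 ≤ ‖gradient f x‖ ^ 2 * (‖u‖ ^ 2 - 2 * inner ℝ u v + ‖v‖ ^ 2) := by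
    rw [← norm_sub_sq_real, ← mul_pow, ← sq_abs]
    exact pow_le_pow_left₀ (abs_nonneg _) (abs_real_inner_le_norm _ _) 2
  have h2 : b ^ 2 ≤ (L / 2 * (δ ^ 2 * ‖u‖ ^ 2)) ^ 2 := by
    rw [← sq_abs]; exact pow_le_pow_left₀ (abs_nonneg _) hu 2
  have h3 : c ^ 2 ≤ (L / 2 * (δ ^ 2 * ‖v‖ ^ 2)) ^ 2 := by
    rw [← sq_abs]; exact pow_le_pow_left₀ (abs_nonneg _) hv 2
  have h4 : (δ * a + (b - c)) ^ 2 ≤ 2 * δ ^ 2 * a ^ 2 + 4 * b ^ 2 + 4 * c ^ 2 := by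
    nlinarith [sq_nonneg (δ * a - (b - c)), sq_nonneg (b + c)]
  rw [ha]
  calc _ ≤ (2 * δ ^ 2 * (‖gradient f x‖ ^ 2 * (‖u‖ ^ 2 - 2 * inner ℝ u v + ‖v‖ ^ 2))
        + 4 * (L / 2 * (δ ^ 2 * ‖u‖ ^ 2)) ^ 2 + 4 * (L / 2 * (δ ^ 2 * ‖v‖ ^ 2)) ^ 2) * ‖u‖ ^ 2 := by
        refine mul_le_mul_of_nonneg_right (h4.trans ?_) (by positivity)
        gcongr
    _ = _ := by ring

lemma aux_cross (d : ℕ) :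
    Integrable (fun p : EuclideanSpace ℝ (Fin d) × EuclideanSpace ℝ (Fin d) =>
      ‖p.1‖ ^ 2 * inner ℝ p.1 p.2)
      ((_root_.stdGaussian d).prod (_root_.stdGaussian d)) ∧
    ∫ p : EuclideanSpace ℝ (Fin d) × EuclideanSpace ℝ (Fin d), ‖p.1‖ ^ 2 * inner ℝ p.1 p.2
      ∂((_root_.stdGaussian d).prod (_root_.stdGaussian d)) = 0 := by
  rw [aux_eq]
  have hid : MemLp id ((3 : ℕ) : ENNReal)
    (ProbabilityTheory.stdGaussian (EuclideanSpace ℝ (Fin d))) :=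
    IsGaussian.memLp_id _ _ (by simp)
  have hi : Integrable (fun p : EuclideanSpace ℝ (Fin d) × EuclideanSpace ℝ (Fin d) =>
      ‖p.1‖ ^ 2 * inner ℝ p.1 p.2)
      ((ProbabilityTheory.stdGaussian (EuclideanSpace ℝ (Fin d))).prod
        (ProbabilityTheory.stdGaussian (EuclideanSpace ℝ (Fin d)))) := by
    have h3 := hid.integrable_norm_pow'
    have h1 := (IsGaussian.integrable_id
      (μ := ProbabilityTheory.stdGaussian (EuclideanSpace ℝ (Fin d)))).norm
    refine (h3.mul_prod h1).mono (by fun_prop) (Filter.Eventually.of_forall fun p => ?_)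
    have := abs_real_inner_le_norm p.1 p.2
    simp only [norm_mul, norm_pow, norm_norm, id, Real.norm_eq_abs, abs_norm]
    calc _ ≤ ‖p.1‖ ^ 2 * (‖p.1‖ * ‖p.2‖) := by gcongr
      _ = _ := by ring
  refine ⟨hi, ?_⟩
  rw [integral_prod _ hi]
  have : ∀ u : EuclideanSpace ℝ (Fin d), ∫ v, ‖u‖ ^ 2 * inner ℝ u v
      ∂(ProbabilityTheory.stdGaussian (EuclideanSpace ℝ (Fin d))) = 0 := by
    intro u
    rw [integral_const_mul]
    have := integral_strongDual_stdGaussian (innerSL ℝ u)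
    simp only [innerSL_apply_apply] at this
    rw [this, mul_zero]
  simp [this]

theorem smooth_perturbation_second_moment
    (d : ℕ) (f : EuclideanSpace ℝ (Fin d) → ℝ) (L₁ δ : ℝ) (hδ : 0 < δ)
    (hdiff : Differentiable ℝ f)
    (hL : ∀ x y, ‖gradient f x - gradient f y‖ ≤ L₁ * ‖x - y‖)
    (x : EuclideanSpace ℝ (Fin d)) :
    ∫ p : EuclideanSpace ℝ (Fin d) × EuclideanSpace ℝ (Fin d),
        (f (x + δ • p.1) - f (x + δ • p.2)) ^ 2 * ‖p.1‖ ^ 2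
        ∂((stdGaussian d).prod (stdGaussian d)) ≤
      4 * ((d : ℝ) + 4) ^ 2 * ‖gradient f x‖ ^ 2 * δ ^ 2
        + 2 * L₁ ^ 2 * δ ^ 4 * ((d : ℝ) + 6) ^ 3 := by
  have hP : IsProbabilityMeasure (_root_.stdGaussian d) := by rw [aux_eq]; infer_instance
  obtain ⟨i1, e1⟩ := aux_norm d 1
  obtain ⟨i2, e2⟩ := aux_norm d 2
  obtain ⟨i3, e3⟩ := aux_norm d 3
  obtain ⟨-, p1, p2, p3⟩ := aux_pi d
  rw [p1] at e1
  rw [p2] at e2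
  rw [p3] at e3
  obtain ⟨ic, ec⟩ := aux_cross d
  have j11 := i1.mul_prod i1
  have j12 := i1.mul_prod i2
  have j2 := i2.comp_fst (_root_.stdGaussian d)
  have j3 := i3.comp_fst (_root_.stdGaussian d)
  have A1 := (j2.add j11).sub (ic.const_mul 2)
  have A2 := j3.add j12
  have hG := (A1.const_mul (2 * δ ^ 2 * ‖gradient f x‖ ^ 2)).add (A2.const_mul (L₁ ^ 2 * δ ^ 4))
  refine (integral_mono_of_nonneg (Filter.Eventually.of_forall fun p => by positivity) hG
    (Filter.Eventually.of_forall fun p => aux_bound f L₁ δ hdiff hL x p.1 p.2)).trans ?_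
  have E1 := integral_sub (j2.add j11) (ic.const_mul 2)
  have E2 := integral_add j2 j11
  have E3 := integral_add j3 j12
  have E := integral_add (A1.const_mul (2 * δ ^ 2 * ‖gradient f x‖ ^ 2))
    (A2.const_mul (L₁ ^ 2 * δ ^ 4))
  rw [integral_const_mul, integral_const_mul] at E
  rw [integral_const_mul, ec, mul_zero, sub_zero] at E1
  rw [integral_prod_mul (fun u => ‖u‖ ^ (2 * 1)) (fun u => ‖u‖ ^ (2 * 1)), e1,
    integral_fun_fst (fun u => ‖u‖ ^ (2 * 2)), e2] at E2
  rw [integral_prod_mul (fun u => ‖u‖ ^ (2 * 1)) (fun u => ‖u‖ ^ (2 * 2)), e1, e2,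
    integral_fun_fst (fun u => ‖u‖ ^ (2 * 3)), e3] at E3
  simp only [one_smul, probReal_univ] at E2 E3
  refine E.le.trans ?_
  refine (congrArg₂ (fun a b => 2 * δ ^ 2 * ‖gradient f x‖ ^ 2 * a + L₁ ^ 2 * δ ^ 4 * b)
    (E1.trans E2) E3).le.trans ?_
  have hd : (0 : ℝ) ≤ d := Nat.cast_nonneg d
  have q1 : (d : ℝ) * (d + 2) + d * d ≤ 2 * (d + 4) ^ 2 := by nlinarith
  have q2 : (d : ℝ) * (d + 2) * (d + 4) + d * (d * (d + 2)) ≤ 2 * (d + 6) ^ 3 := by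
    nlinarith [mul_nonneg hd hd]
  calc _ ≤ 2 * δ ^ 2 * ‖gradient f x‖ ^ 2 * (2 * ((d : ℝ) + 4) ^ 2)
        + L₁ ^ 2 * δ ^ 4 * (2 * ((d : ℝ) + 6) ^ 3) := by
        gcongr
    _ = _ := by ring
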